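/- Suppose U is a unitary on (ℂ²)^{⊗(n+2)} ⊗ (ℂ²)^{⊗α} such that (Π_k^± ⊗ ⟨0^α|) U (Π_k^± ⊗ |0^α⟩) = Π_k^± P Π_k^±, where P is the harmonic-walk transition matrix. Then V := ((I^{⊗n} ⊗ (HZ) ⊗ I) ⊗ I^{⊗α}) U satisfies (Π_k ⊗ ⟨0^α|) V (Π_k ⊗ |0^α⟩) = Δ_k / (√2 · K). -/

import Mathlib

open BigOperators Matrix Kronecker

attribute [local instance] Classical.propDecidable

noncomputable section

namespace QWSC

/-- A finite abstract simplicial complex on the vertex set `Fin n`: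
a family of vertex sets closed under taking subsets. -/
def IsComplex (n : ℕ) (X : Finset (Finset (Fin n))) : Prop :=
  ∀ s ∈ X, ∀ t ⊆ s, t ∈ X

/-- The weighted boundary operator `∂_k : C_k → C_{k-1}` written as a matrix in the
orthonormal chain bases (rows are indexed by `(k-1)`-simplices, columns by `k`-simplices;
a `k`-simplex has `k+1` vertices).  On the orthonormal basis vector of
`σ = {v_0 < … < v_k}` it has entries `(-1)^j w(v_j)` at the face `σ \ {v_j}`. -/
def boundary (n : ℕ) (X : Finset (Finset (Fin n))) (w : Fin n → ℝ) (k : ℕ) :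
    Matrix (Finset (Fin n)) (Finset (Fin n)) ℝ :=
  Matrix.of fun τ σ =>
    if σ ∈ X ∧ σ.card = k + 1 ∧ τ ⊆ σ ∧ τ.card = k then
      ∑ v ∈ σ \ τ, (-1 : ℝ) ^ ((σ.filter fun u => u < v).card) * w v
    else 0

/-- The weighted up Laplacian `Δ_k^{up} = ∂_{k+1} ∂_{k+1}^*`. -/
def upLap (n : ℕ) (X : Finset (Finset (Fin n))) (w : Fin n → ℝ) (k : ℕ) :
    Matrix (Finset (Fin n)) (Finset (Fin n)) ℝ :=
  boundary n X w (k + 1) * (boundary n X w (k + 1))ᵀ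

/-- The weighted down Laplacian `Δ_k^{down} = ∂_k^* ∂_k`. -/
def downLap (n : ℕ) (X : Finset (Finset (Fin n))) (w : Fin n → ℝ) (k : ℕ) :
    Matrix (Finset (Fin n)) (Finset (Fin n)) ℝ :=
  (boundary n X w k)ᵀ * boundary n X w k

/-- The weighted combinatorial Laplacian `Δ_k = Δ_k^{up} + Δ_k^{down}`. -/
def fullLap (n : ℕ) (X : Finset (Finset (Fin n))) (w : Fin n → ℝ) (k : ℕ) :
    Matrix (Finset (Fin n)) (Finset (Fin n)) ℝ :=
  upLap n X w k + downLap n X w k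

/-- `true` iff removing the vertex `v` from `σ` reverses the induced orientation,
i.e. the position of `v` in the increasing ordering of `σ` is odd. -/
def faceFlip (n : ℕ) (σ : Finset (Fin n)) (v : Fin n) : Bool :=
  decide ((σ.filter fun u => u < v).card % 2 = 1)

/-- An oriented simplex: a vertex set together with an orientation bit
(`false` = positively oriented, `true` = negatively oriented). -/
abbrev OSimp (n : ℕ) := Finset (Fin n) × Bool

/-- Up-adjacency `σ ∼↑ σ'` of oriented simplices: the vertex sets are distinct, their
union is a common coface belonging to `X`, and the orientations induced on the common
coface by `σ` and by `σ'` agree. -/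
def UpAdj (n : ℕ) (X : Finset (Finset (Fin n))) (σ σ' : OSimp n) : Prop :=
  σ.1 ≠ σ'.1 ∧ σ.1 ∪ σ'.1 ∈ X ∧ (σ.1 ∪ σ'.1).card = σ.1.card + 1 ∧
    σ'.1.card = σ.1.card ∧
    ∀ v ∈ σ'.1 \ σ.1, ∀ v' ∈ σ.1 \ σ'.1,
      xor σ.2 (faceFlip n (σ.1 ∪ σ'.1) v) = xor σ'.2 (faceFlip n (σ.1 ∪ σ'.1) v')

/-- Down-adjacency `σ ∼↓ σ'` of oriented simplices: the vertex sets are distinct, they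
share a common face (their intersection, of cardinality one less), and the orientations
induced on the common face by `σ` and by `σ'` agree. -/
def DownAdj (n : ℕ) (σ σ' : OSimp n) : Prop :=
  σ.1 ≠ σ'.1 ∧ (σ.1 ∩ σ'.1).card + 1 = σ.1.card ∧ σ'.1.card = σ.1.card ∧
    ∀ v ∈ σ.1 \ σ'.1, ∀ v' ∈ σ'.1 \ σ.1,
      xor σ.2 (faceFlip n σ.1 v) = xor σ'.2 (faceFlip n σ'.1 v')

/-- `up(σ)`: the vertices `u ∉ σ` with `σ ∪ {u} ∈ X`. -/
def upSet (n : ℕ) (X : Finset (Finset (Fin n))) (σ : Finset (Fin n)) : Finset (Fin n) :=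
  Finset.univ.filter fun u => u ∉ σ ∧ insert u σ ∈ X

/-- The set of `k`-simplices of `X` (those with `k+1` vertices). -/
def simplices (n : ℕ) (X : Finset (Finset (Fin n))) (k : ℕ) : Finset (Finset (Fin n)) :=
  X.filter fun s => s.card = k + 1

/-- Normalization constant `K^{up} = max_{σ∈X_k} Σ_{u∈V∖σ} Σ_{v∈σ∪{u}} w(u)w(v)`. -/
def Kup (n : ℕ) (X : Finset (Finset (Fin n))) (w : Fin n → ℝ) (k : ℕ) : ℝ :=
  sSup {x : ℝ | ∃ σ ∈ X, σ.card = k + 1 ∧ x = ∑ u ∈ σᶜ, ∑ v ∈ insert u σ, w u * w v}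

/-- Normalization constant `K^{down} = max_{σ∈X_k} Σ_{u∈σ} Σ_{v∈V∖(σ∖{u})} w(u)w(v)`. -/
def Kdown (n : ℕ) (X : Finset (Finset (Fin n))) (w : Fin n → ℝ) (k : ℕ) : ℝ :=
  sSup {x : ℝ | ∃ σ ∈ X, σ.card = k + 1 ∧ x = ∑ u ∈ σ, ∑ v ∈ (σ.erase u)ᶜ, w u * w v}

/-- Normalization constant `K = max_{σ∈X_k} (Σ_{v∈V} w(v)² + Σ_{u∈V∖σ} Σ_{v∈σ} w(u)w(v))`. -/
def Kfull (n : ℕ) (X : Finset (Finset (Fin n))) (w : Fin n → ℝ) (k : ℕ) : ℝ :=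
  sSup {x : ℝ | ∃ σ ∈ X, σ.card = k + 1 ∧
    x = (∑ v : Fin n, w v ^ 2) + ∑ u ∈ σᶜ, ∑ v ∈ σ, w u * w v}

/-- The `k`-th chain space `C_k`: the span of the basis vectors indexed by
`k`-simplices of `X`, inside the coordinate space of the orthonormal chain basis. -/
def chainSpace (n : ℕ) (X : Finset (Finset (Fin n))) (k : ℕ) :
    Submodule ℝ (Finset (Fin n) → ℝ) :=
  Submodule.span ℝ ((fun σ => Pi.single σ (1 : ℝ)) '' {σ | σ ∈ X ∧ σ.card = k + 1})

/-- The state space `S_k = X_k^± ∪ {Θ}` of the walks; `none` is the absorbing state `Θ`. -/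
abbrev SState (n : ℕ) := Option (OSimp n)

/-- A state is a member of `S_k`: either the absorbing state, or an oriented
`k`-simplex of `X`. -/
def valid (n : ℕ) (X : Finset (Finset (Fin n))) (k : ℕ) : SState n → Prop
  | none => True
  | some σ => σ.1 ∈ X ∧ σ.1.card = k + 1

/-- `η^{up}_σ = 1 − (1/K^{up}) Σ_{τ∈X_k^+} |(Δ_k^{up})_{τ,σ_+}|`. -/
def etaUp (n : ℕ) (X : Finset (Finset (Fin n))) (w : Fin n → ℝ) (k : ℕ) (σ : OSimp n) : ℝ :=
  1 - (∑ τ ∈ simplices n X k, |upLap n X w k τ σ.1|) / Kup n X w k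

/-- `η^{down}_σ = 1 − (1/K^{down}) Σ_{τ∈X_k^+} |(Δ_k^{down})_{τ,σ_+}|`. -/
def etaDown (n : ℕ) (X : Finset (Finset (Fin n))) (w : Fin n → ℝ) (k : ℕ) (σ : OSimp n) : ℝ :=
  1 - (∑ τ ∈ simplices n X k, |downLap n X w k τ σ.1|) / Kdown n X w k

/-- `η_σ = 1 − (1/K) Σ_{τ∈X_k^+} |(Δ_k)_{τ,σ_+}|`. -/
def etaFull (n : ℕ) (X : Finset (Finset (Fin n))) (w : Fin n → ℝ) (k : ℕ) (σ : OSimp n) : ℝ :=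
  1 - (∑ τ ∈ simplices n X k, |fullLap n X w k τ σ.1|) / Kfull n X w k

/-- The up-walk transition matrix `P^{up}` on `S_k`. -/
def Pup (n : ℕ) (X : Finset (Finset (Fin n))) (w : Fin n → ℝ) (k : ℕ) :
    SState n → SState n → ℝ
  | some σ, some σ' =>
      if σ.1 ∈ X ∧ σ.1.card = k + 1 ∧ σ'.1 ∈ X ∧ σ'.1.card = k + 1 then
        if σ = σ' then (∑ u ∈ upSet n X σ.1, w u ^ 2) / Kup n X w k
        else if UpAdj n X σ σ' then
          ((∑ v ∈ σ.1 \ σ'.1, w v) * (∑ v ∈ σ'.1 \ σ.1, w v)) / Kup n X w k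
        else 0
      else 0
  | some σ, none => if σ.1 ∈ X ∧ σ.1.card = k + 1 then etaUp n X w k σ else 0
  | none, none => 1
  | none, some _ => 0

/-- The down-walk transition matrix `P^{down}` on `S_k`. -/
def Pdown (n : ℕ) (X : Finset (Finset (Fin n))) (w : Fin n → ℝ) (k : ℕ) :
    SState n → SState n → ℝ
  | some σ, some σ' =>
      if σ.1 ∈ X ∧ σ.1.card = k + 1 ∧ σ'.1 ∈ X ∧ σ'.1.card = k + 1 then
        if σ = σ' then (∑ v ∈ σ.1, w v ^ 2) / Kdown n X w k
        else if DownAdj n σ σ' then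
          ((∑ v ∈ σ.1 \ σ'.1, w v) * (∑ v ∈ σ'.1 \ σ.1, w v)) / Kdown n X w k
        else 0
      else 0
  | some σ, none => if σ.1 ∈ X ∧ σ.1.card = k + 1 then etaDown n X w k σ else 0
  | none, none => 1
  | none, some _ => 0

/-- The harmonic-walk transition matrix `P` on `S_k`. -/
def Pharm (n : ℕ) (X : Finset (Finset (Fin n))) (w : Fin n → ℝ) (k : ℕ) :
    SState n → SState n → ℝ
  | some σ, some σ' =>
      if σ.1 ∈ X ∧ σ.1.card = k + 1 ∧ σ'.1 ∈ X ∧ σ'.1.card = k + 1 then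
        if σ = σ' then
          ((∑ u ∈ upSet n X σ.1, w u ^ 2) + ∑ v ∈ σ.1, w v ^ 2) / Kfull n X w k
        else if DownAdj n σ σ' ∧ ¬ UpAdj n X σ (σ'.1, !σ'.2) then
          ((∑ v ∈ σ.1 \ σ'.1, w v) * (∑ v ∈ σ'.1 \ σ.1, w v)) / Kfull n X w k
        else 0
      else 0
  | some σ, none => if σ.1 ∈ X ∧ σ.1.card = k + 1 then etaFull n X w k σ else 0
  | none, none => 1
  | none, some _ => 0

/-! ### Quantum encodings -/

/-- The computational basis of `(ℂ²)^{⊗(n+2)}`: `n` membership qubits, one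
orientation qubit, and one qubit flagging the absorbing state. -/
abbrev QIdx (n : ℕ) := (Fin n → Bool) × Bool × Bool

/-- The encoding of states of `S_k` as computational basis states:
`|σ⟩ = |x_σ⟩|s(σ)⟩|0⟩` and `|Θ⟩ = |0^n⟩|0⟩|1⟩`. -/
def encode (n : ℕ) : SState n → QIdx n
  | none => (fun _ => false, false, true)
  | some σ => (fun i => decide (i ∈ σ.1), σ.2, false)

/-- The all-zeros basis state `|0^{n+2}⟩`. -/
def zeroQ (n : ℕ) : QIdx n := (fun _ => false, false, false)

/-- The projector `Π_k^±` onto the span of the encoded oriented `k`-simplices of `X`. -/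
def PiPM (n : ℕ) (X : Finset (Finset (Fin n))) (k : ℕ) : Matrix (QIdx n) (QIdx n) ℂ :=
  Matrix.of fun p q =>
    if p = q ∧ ∃ σ : OSimp n, σ.1 ∈ X ∧ σ.1.card = k + 1 ∧ p = encode n (some σ) then 1 else 0

/-- The projector `Π_k` onto the span of the encoded positively oriented
`k`-simplices of `X`. -/
def PiK (n : ℕ) (X : Finset (Finset (Fin n))) (k : ℕ) : Matrix (QIdx n) (QIdx n) ℂ :=
  Matrix.of fun p q =>
    if p = q ∧ ∃ s ∈ X, s.card = k + 1 ∧ p = encode n (some (s, false)) then 1 else 0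

/-- Decode a basis state into the state of `S_k` it represents (if any). -/
def decodeQ (n : ℕ) : QIdx n → Option (SState n) := fun q =>
  if q.2.2 = false then some (some ((Finset.univ.filter fun i => q.1 i = true), q.2.1))
  else if q = encode n none then some none else none

/-- Identify a transition kernel `P` on `S_k` with the operator on `(ℂ²)^{⊗(n+2)}`
having `⟨σ'|P|σ⟩ = P_{σ,σ'}` for `σ, σ' ∈ S_k`, vanishing off the span of `S_k`. -/
def toQMat (n : ℕ) (P : SState n → SState n → ℝ) : Matrix (QIdx n) (QIdx n) ℂ :=
  Matrix.of fun q' q =>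
    match decodeQ n q, decodeQ n q' with
    | some σ, some σ' => (P σ σ' : ℂ)
    | _, _ => 0

/-- Identify a matrix indexed by vertex sets (acting on the chain space in the
orthonormal basis of positively oriented simplices) with an operator on
`(ℂ²)^{⊗(n+2)}` supported on the encoded positively oriented simplices. -/
def lapQ (n : ℕ) (L : Matrix (Finset (Fin n)) (Finset (Fin n)) ℝ) :
    Matrix (QIdx n) (QIdx n) ℂ :=
  Matrix.of fun q' q =>
    if q'.2.1 = false ∧ q'.2.2 = false ∧ q.2.1 = false ∧ q.2.2 = false then
      (L (Finset.univ.filter fun i => q'.1 i = true)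
         (Finset.univ.filter fun i => q.1 i = true) : ℂ)
    else 0

/-- The SWAP unitary exchanging the two `(n+2)`-qubit registers. -/
def swapMat (n : ℕ) : Matrix (QIdx n × QIdx n) (QIdx n × QIdx n) ℂ :=
  Matrix.of fun p q => if p.1 = q.2 ∧ p.2 = q.1 then 1 else 0

/-- The compression `(· ⊗ ⟨0^{n+2}|) W (· ⊗ |0^{n+2}⟩)` of an operator on two
`(n+2)`-qubit registers to the first register. -/
def compress (n : ℕ) (W : Matrix (QIdx n × QIdx n) (QIdx n × QIdx n) ℂ) :
    Matrix (QIdx n) (QIdx n) ℂ :=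
  Matrix.of fun q' q => W (q', zeroQ n) (q, zeroQ n)

/-- The compression `(· ⊗ ⟨0^α|) W (· ⊗ |0^α⟩)` of an operator on the system
register together with an `α`-qubit ancilla register. -/
def compressA (n α : ℕ) (W : Matrix (QIdx n × (Fin α → Bool)) (QIdx n × (Fin α → Bool)) ℂ) :
    Matrix (QIdx n) (QIdx n) ℂ :=
  Matrix.of fun q' q => W (q', fun _ => false) (q, fun _ => false)

/-- The gate `I^{⊗n} ⊗ (HZ) ⊗ I` acting on the orientation qubit, where `H` is the
Hadamard gate and `Z` the Pauli-Z gate. -/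
def hzGate (n : ℕ) : Matrix (QIdx n) (QIdx n) ℂ :=
  Matrix.of fun p q =>
    if p.1 = q.1 ∧ p.2.2 = q.2.2 then
      (if p.2.1 = false ∧ q.2.1 = true then -((Real.sqrt 2 : ℂ))⁻¹ else ((Real.sqrt 2 : ℂ))⁻¹)
    else 0


/-!
Distinct `k`-simplices `σ = ρ ∪ {a}` and `τ = ρ ∪ {b}` with a common face `ρ` have `±w(a)w(b)` as
their entry in the down Laplacian.  If `σ ∪ τ` is a simplex, the entry of the up Laplacian is the
opposite number, because inserting the smaller of `a` and `b` changes the position of the larger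
one.  The harmonic walk moves along exactly the pairs that survive this cancellation, and the sign
of the surviving entry is `+` or `-` according to whether `σ₊` moves to `τ₊` or to `τ₋`.  Hence
`Δ_k(τ, σ) / K = P(σ₊, τ₊) - P(σ₊, τ₋)`, and this difference is, up to the factor `1 / √2`, what
the row `⟨0|HZ = (⟨0| - ⟨1|) / √2` extracts from the orientation qubit.
-/

section Boundary

variable {n k : ℕ} {X : Finset (Finset (Fin n))} {w : Fin n → ℝ}

theorem mem_simplices {s : Finset (Fin n)} : s ∈ simplices n X k ↔ s ∈ X ∧ s.card = k + 1 :=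
  Finset.mem_filter

/-- The sign `±1` of an orientation bit (`false` is positive), turning the orientation bits of the
walk into coefficients of the boundary operator. -/
def orientationSign (b : Bool) : ℝ := if b then -1 else 1

theorem orientationSign_mul_self (b : Bool) : orientationSign b * orientationSign b = 1 := by
  cases b <;> simp [orientationSign]

theorem orientationSign_not (b : Bool) : orientationSign (!b) = -orientationSign b := by
  cases b <;> simp [orientationSign]

theorem orientationSign_xor (b c : Bool) :
    orientationSign (xor b c) = orientationSign b * orientationSign c := by
  cases b <;> cases c <;> simp [orientationSign]

theorem ite_eq_sub_ite_eq_not (x y : Bool) (c : ℝ) :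
    (if x = y then c else 0) - (if x = !y then c else 0) = orientationSign (xor y x) * c := by
  cases x <;> cases y <;> simp [orientationSign]

theorem orientationSign_faceFlip (σ : Finset (Fin n)) (v : Fin n) :
    orientationSign (faceFlip n σ v) = (-1) ^ (σ.filter fun u => u < v).card := by
  simp only [orientationSign, faceFlip, decide_eq_true_eq, ← Nat.odd_iff]
  split_ifs with h
  · rw [h.neg_one_pow]
  · rw [(Nat.not_odd_iff_even.1 h).neg_one_pow]

theorem faceFlip_insert {σ : Finset (Fin n)} {v : Fin n} (hv : v ∉ σ) (u : Fin n) :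
    faceFlip n (insert v σ) u = xor (decide (v < u)) (faceFlip n σ u) := by
  unfold faceFlip
  rw [Finset.filter_insert]
  split_ifs with h
  · rw [Finset.card_insert_of_notMem (by simp [hv])]
    grind
  · simp [h]

theorem faceFlip_insert_self {ρ : Finset (Fin n)} {a : Fin n} (ha : a ∉ ρ) :
    faceFlip n (insert a ρ) a = faceFlip n ρ a := by
  simp [faceFlip_insert ha]

theorem xor_faceFlip_insert_insert {ρ : Finset (Fin n)} {a b : Fin n} (ha : a ∉ ρ) (hb : b ∉ ρ)
    (hab : a ≠ b) :
    xor (faceFlip n (insert a (insert b ρ)) a) (faceFlip n (insert a (insert b ρ)) b) =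
      !xor (faceFlip n ρ a) (faceFlip n ρ b) := by
  have ha' : a ∉ insert b ρ := by simp [hab, ha]
  simp only [faceFlip_insert ha', faceFlip_insert hb]
  rcases lt_or_gt_of_ne hab with h | h <;> simp [h, h.not_gt]

theorem face_of_boundary_ne_zero {τ σ : Finset (Fin n)} (h : boundary n X w k τ σ ≠ 0) :
    σ ∈ simplices n X k ∧ τ ⊆ σ ∧ τ.card = k := by
  rw [boundary, Matrix.of_apply, ite_ne_right_iff] at h
  exact ⟨mem_simplices.2 ⟨h.1.1, h.1.2.1⟩, h.1.2.2⟩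

theorem boundary_insert {τ : Finset (Fin n)} {v : Fin n} (hv : v ∉ τ) (hτ : τ.card = k)
    (hX : insert v τ ∈ X) :
    boundary n X w k τ (insert v τ) = orientationSign (faceFlip n (insert v τ) v) * w v := by
  simp [boundary, hv, hτ, hX, orientationSign_faceFlip]

theorem boundary_erase {σ : Finset (Fin n)} {v : Fin n} (hσ : σ ∈ simplices n X k) (hv : v ∈ σ) :
    boundary n X w k (σ.erase v) σ = orientationSign (faceFlip n σ v) * w v := by
  obtain ⟨hX, hcard⟩ := mem_simplices.1 hσ
  simpa only [Finset.insert_erase hv] using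
    boundary_insert (k := k) (w := w) (Finset.notMem_erase v σ)
      (by rw [Finset.card_erase_of_mem hv, hcard, Nat.add_sub_cancel])
      ((Finset.insert_erase hv).symm ▸ hX)

theorem vecMul_boundary_apply (f : Finset (Fin n) → ℝ) {σ : Finset (Fin n)}
    (hσ : σ ∈ simplices n X k) :
    (f ᵥ* boundary n X w k) σ =
      ∑ v ∈ σ, f (σ.erase v) * (orientationSign (faceFlip n σ v) * w v) := by
  rw [Matrix.vecMul, dotProduct,
    ← Finset.sum_subset (Finset.subset_univ (σ.image σ.erase)) fun ρ _ hρ => ?_,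
    Finset.sum_image (Finset.erase_injOn σ)]
  · exact Finset.sum_congr rfl fun v hv => by rw [boundary_erase hσ hv]
  · by_contra hne
    obtain ⟨-, hsub, hcard⟩ := face_of_boundary_ne_zero (right_ne_zero_of_mul hne)
    obtain ⟨v, hv, rfl⟩ :=
      Finset.exists_eq_insert_iff.2 ⟨hsub, by rw [hcard, (mem_simplices.1 hσ).2]⟩
    exact hρ (Finset.mem_image.2 ⟨v, Finset.mem_insert_self v ρ, Finset.erase_insert hv⟩)

theorem boundary_mulVec_apply (f : Finset (Fin n) → ℝ) {τ : Finset (Fin n)} (hτ : τ.card = k) :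
    (boundary n X w k *ᵥ f) τ =
      ∑ v ∈ upSet n X τ,
        orientationSign (faceFlip n (insert v τ) v) * w v * f (insert v τ) := by
  have mem_upSet {v : Fin n} : v ∈ upSet n X τ ↔ v ∉ τ ∧ insert v τ ∈ X := by simp [upSet]
  have hinj : Set.InjOn (fun v => insert v τ) (upSet n X τ : Set (Fin n)) :=
    fun v hv _ _ h => (Finset.insert_inj (mem_upSet.1 hv).1).1 h
  rw [Matrix.mulVec, dotProduct,
    ← Finset.sum_subset (Finset.subset_univ ((upSet n X τ).image fun v => insert v τ))
      fun ρ _ hρ => ?_,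
    Finset.sum_image hinj]
  · refine Finset.sum_congr rfl fun v hv => ?_
    rw [boundary_insert (mem_upSet.1 hv).1 hτ (mem_upSet.1 hv).2]
  · by_contra hne
    obtain ⟨hρX, hsub, -⟩ := face_of_boundary_ne_zero (left_ne_zero_of_mul hne)
    obtain ⟨hρX, hρcard⟩ := mem_simplices.1 hρX
    obtain ⟨v, hv, rfl⟩ := Finset.exists_eq_insert_iff.2 ⟨hsub, by rw [hτ, hρcard]⟩
    exact hρ (Finset.mem_image.2 ⟨v, mem_upSet.2 ⟨hv, hρX⟩, rfl⟩)

end Boundary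

section Laplacian

variable {n k : ℕ} {X : Finset (Finset (Fin n))} {w : Fin n → ℝ}

theorem downLap_eq_vecMul (t s : Finset (Fin n)) :
    downLap n X w k t s = ((fun ρ => boundary n X w k ρ t) ᵥ* boundary n X w k) s :=
  rfl

theorem upLap_eq_mulVec (t s : Finset (Fin n)) :
    upLap n X w k t s = (boundary n X w (k + 1) *ᵥ fun σ => boundary n X w (k + 1) s σ) t :=
  rfl

theorem downLap_apply_self {s : Finset (Fin n)} (hs : s ∈ simplices n X k) :
    downLap n X w k s s = ∑ v ∈ s, w v ^ 2 := by
  rw [downLap_eq_vecMul, vecMul_boundary_apply _ hs]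
  refine Finset.sum_congr rfl fun v hv => ?_
  rw [boundary_erase hs hv, mul_mul_mul_comm, orientationSign_mul_self,
    one_mul, sq]

theorem upLap_apply_self {s : Finset (Fin n)} (hs : s.card = k + 1) :
    upLap n X w k s s = ∑ v ∈ upSet n X s, w v ^ 2 := by
  rw [upLap_eq_mulVec, boundary_mulVec_apply _ hs]
  refine Finset.sum_congr rfl fun v hv => ?_
  obtain ⟨hvs, hvX⟩ : v ∉ s ∧ insert v s ∈ X := by simpa [upSet] using hv
  rw [boundary_insert hvs hs hvX, mul_mul_mul_comm, orientationSign_mul_self, one_mul, sq]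

theorem downLap_insert_insert {ρ : Finset (Fin n)} {a b : Fin n} (ha : a ∉ ρ) (hb : b ∉ ρ)
    (hab : a ≠ b) (haX : insert a ρ ∈ simplices n X k) (hbX : insert b ρ ∈ simplices n X k) :
    downLap n X w k (insert a ρ) (insert b ρ) =
      orientationSign (xor (faceFlip n ρ a) (faceFlip n ρ b)) * (w a * w b) := by
  have hρ : ρ.card = k := by
    simpa [Finset.card_insert_of_notMem ha] using (mem_simplices.1 haX).2
  rw [downLap_eq_vecMul, vecMul_boundary_apply _ hbX,
    Finset.sum_eq_single_of_mem b (Finset.mem_insert_self b ρ) fun v _ hvb => ?_]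
  · rw [Finset.erase_insert hb,
      boundary_insert ha hρ (mem_simplices.1 haX).1, faceFlip_insert_self ha,
      faceFlip_insert_self hb, orientationSign_xor, mul_mul_mul_comm]
  · refine mul_eq_zero_of_left (by_contra fun hne => ?_) _
    have hsub : (insert b ρ).erase v ⊆ insert a ρ := (face_of_boundary_ne_zero hne).2.1
    have hb' : b ∈ insert a ρ := hsub (by simp [hvb.symm])
    simp [hab.symm, hb] at hb'

theorem upLap_insert_insert {ρ : Finset (Fin n)} {a b : Fin n} (ha : a ∉ ρ) (hb : b ∉ ρ)
    (hab : a ≠ b) (hρ : ρ.card = k) :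
    upLap n X w k (insert a ρ) (insert b ρ) =
      if insert a (insert b ρ) ∈ X then
        -(orientationSign (xor (faceFlip n ρ a) (faceFlip n ρ b)) * (w a * w b))
      else 0 := by
  have hba' : a ∉ insert b ρ := by simp [hab, ha]
  have hcard_a : (insert a ρ).card = k + 1 := by rw [Finset.card_insert_of_notMem ha, hρ]
  have hcard_b : (insert b ρ).card = k + 1 := by rw [Finset.card_insert_of_notMem hb, hρ]
  have eq_b_of_ne_zero (v : Fin n)
      (h : boundary n X w (k + 1) (insert b ρ) (insert v (insert a ρ)) ≠ 0) : v = b := by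
    have hbv : b ∈ insert v (insert a ρ) :=
      (face_of_boundary_ne_zero h).2.1 (Finset.mem_insert_self b ρ)
    simpa [hab.symm, hb, eq_comm] using hbv
  rw [upLap_eq_mulVec, boundary_mulVec_apply _ hcard_a]
  split_ifs with hX
  · rw [Finset.sum_eq_single_of_mem b (by simp [upSet, hab.symm, hb, Finset.insert_comm b a, hX])
        fun v _ hvb => mul_eq_zero_of_right _ (not_imp_comm.1 (eq_b_of_ne_zero v) hvb),
      Finset.insert_comm b a, boundary_insert hba' hcard_b hX, mul_mul_mul_comm,
      ← orientationSign_xor, Bool.xor_comm, xor_faceFlip_insert_insert ha hb hab,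
      orientationSign_not, mul_comm (w b), neg_mul]
  · refine Finset.sum_eq_zero fun v hv => mul_eq_zero_of_right _ (by_contra fun hne => hX ?_)
    have hvX : insert v (insert a ρ) ∈ X := (Finset.mem_filter.1 hv).2.2
    rwa [eq_b_of_ne_zero v hne, Finset.insert_comm b a] at hvX

theorem fullLap_insert_insert {ρ : Finset (Fin n)} {a b : Fin n} (ha : a ∉ ρ) (hb : b ∉ ρ)
    (hab : a ≠ b) (haX : insert a ρ ∈ simplices n X k) (hbX : insert b ρ ∈ simplices n X k) :
    fullLap n X w k (insert a ρ) (insert b ρ) =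
      if insert a (insert b ρ) ∈ X then 0
      else orientationSign (xor (faceFlip n ρ a) (faceFlip n ρ b)) * (w a * w b) := by
  have hρ : ρ.card = k := by
    simpa [Finset.card_insert_of_notMem ha] using (mem_simplices.1 haX).2
  rw [fullLap, Matrix.add_apply, upLap_insert_insert ha hb hab hρ,
    downLap_insert_insert ha hb hab haX hbX]
  split_ifs
  · exact neg_add_cancel _
  · exact zero_add _

theorem exists_face_of_downLap_ne_zero {t s : Finset (Fin n)} (h : downLap n X w k t s ≠ 0) :
    t ∈ simplices n X k ∧ s ∈ simplices n X k ∧ ∃ ρ ⊆ t ∩ s, ρ.card = k := by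
  rw [downLap, Matrix.mul_apply] at h
  obtain ⟨ρ, -, hρ⟩ := Finset.exists_ne_zero_of_sum_ne_zero h
  obtain ⟨ht, hρt, hcard⟩ := face_of_boundary_ne_zero (left_ne_zero_of_mul hρ)
  obtain ⟨hs, hρs, -⟩ := face_of_boundary_ne_zero (right_ne_zero_of_mul hρ)
  exact ⟨ht, hs, ρ, Finset.subset_inter hρt hρs, hcard⟩

theorem exists_coface_of_upLap_ne_zero {t s : Finset (Fin n)} (h : upLap n X w k t s ≠ 0) :
    t.card = k + 1 ∧ s.card = k + 1 ∧ ∃ σ ∈ simplices n X (k + 1), t ∪ s ⊆ σ := by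
  rw [upLap, Matrix.mul_apply] at h
  obtain ⟨σ, -, hσ⟩ := Finset.exists_ne_zero_of_sum_ne_zero h
  obtain ⟨hσX, htσ, ht⟩ := face_of_boundary_ne_zero (left_ne_zero_of_mul hσ)
  obtain ⟨-, hsσ, hs⟩ := face_of_boundary_ne_zero (right_ne_zero_of_mul hσ)
  exact ⟨ht, hs, σ, hσX, Finset.union_subset htσ hsσ⟩

theorem mem_simplices_of_fullLap_ne_zero (hX : IsComplex n X) {t s : Finset (Fin n)}
    (h : fullLap n X w k t s ≠ 0) : t ∈ simplices n X k ∧ s ∈ simplices n X k := by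
  by_cases hdown : downLap n X w k t s = 0
  · have hup : upLap n X w k t s ≠ 0 := by simpa [fullLap, hdown] using h
    obtain ⟨ht, hs, σ, hσ, hsub⟩ := exists_coface_of_upLap_ne_zero hup
    have hσX := (mem_simplices.1 hσ).1
    exact ⟨mem_simplices.2 ⟨hX σ hσX t (Finset.union_subset_left hsub), ht⟩,
      mem_simplices.2 ⟨hX σ hσX s (Finset.union_subset_right hsub), hs⟩⟩
  · obtain ⟨ht, hs, -⟩ := exists_face_of_downLap_ne_zero hdown
    exact ⟨ht, hs⟩

theorem card_inter_eq_of_fullLap_ne_zero {t s : Finset (Fin n)} (hts : t ≠ s)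
    (h : fullLap n X w k t s ≠ 0) : (t ∩ s).card = k := by
  have inter_lt (hcard : t.card = s.card) : (t ∩ s).card < t.card := by
    refine Finset.card_lt_card (Finset.inter_subset_left.ssubset_of_ne fun heq => hts ?_)
    exact Finset.eq_of_subset_of_card_le (Finset.inter_eq_left.1 heq) hcard.ge
  by_cases hdown : downLap n X w k t s = 0
  · have hup : upLap n X w k t s ≠ 0 := by simpa [fullLap, hdown] using h
    obtain ⟨ht, hs, σ, hσ, hsub⟩ := exists_coface_of_upLap_ne_zero hup
    have := (mem_simplices.1 hσ).2
    have := inter_lt (ht.trans hs.symm)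
    have := Finset.card_le_card hsub
    have := Finset.card_union_add_card_inter t s
    omega
  · obtain ⟨ht, hs, ρ, hρ, hcard⟩ := exists_face_of_downLap_ne_zero hdown
    have htcard := (mem_simplices.1 ht).2
    have := inter_lt (htcard.trans (mem_simplices.1 hs).2.symm)
    have := Finset.card_le_card hρ
    omega

end Laplacian

section HarmonicWalk

variable {n k : ℕ} {X : Finset (Finset (Fin n))} {w : Fin n → ℝ}

theorem Kfull_pos (hw : ∀ v, 0 < w v) (hne : (simplices n X k).Nonempty) :
    0 < Kfull n X w k := by
  obtain ⟨σ, hσ⟩ := hne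
  obtain ⟨hσX, hcard⟩ := mem_simplices.1 hσ
  obtain ⟨u, -⟩ : σ.Nonempty := Finset.card_pos.1 (by omega)
  have hbdd : BddAbove {x : ℝ | ∃ σ ∈ X, σ.card = k + 1 ∧
      x = (∑ v : Fin n, w v ^ 2) + ∑ u ∈ σᶜ, ∑ v ∈ σ, w u * w v} := by
    refine (((X : Set (Finset (Fin n))).toFinite.image fun σ =>
      (∑ v : Fin n, w v ^ 2) + ∑ u ∈ σᶜ, ∑ v ∈ σ, w u * w v).subset ?_).bddAbove
    rintro _ ⟨σ, hσX, -, rfl⟩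
    exact ⟨σ, hσX, rfl⟩
  refine lt_csSup_of_lt hbdd ⟨σ, hσX, hcard, rfl⟩ (add_pos_of_pos_of_nonneg ?_ ?_)
  · exact Finset.sum_pos (fun v _ => pow_pos (hw v) 2) ⟨u, Finset.mem_univ u⟩
  · exact Finset.sum_nonneg fun u _ => Finset.sum_nonneg fun v _ => (mul_pos (hw u) (hw v)).le

theorem downAdj_insert_insert {ρ : Finset (Fin n)} {a b : Fin n} (ha : a ∉ ρ) (hb : b ∉ ρ)
    (hab : a ≠ b) (x y : Bool) :
    DownAdj n (insert a ρ, x) (insert b ρ, y) ↔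
      xor x (faceFlip n ρ a) = xor y (faceFlip n ρ b) := by
  have hne : insert a ρ ≠ insert b ρ := (Finset.insert_inj ha).not.2 hab
  have hinter : insert a ρ ∩ insert b ρ = ρ := by grind
  simp [DownAdj, hne, hinter, Finset.insert_sdiff_insert' hab ha,
    Finset.insert_sdiff_insert' hab.symm hb, ha, hb, faceFlip_insert_self]

theorem upAdj_insert_insert_not {ρ : Finset (Fin n)} {a b : Fin n} (ha : a ∉ ρ) (hb : b ∉ ρ)
    (hab : a ≠ b) (x y : Bool) :
    UpAdj n X (insert a ρ, x) (insert b ρ, !y) ↔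
      insert a (insert b ρ) ∈ X ∧ xor x (faceFlip n ρ a) = xor y (faceFlip n ρ b) := by
  have hne : insert a ρ ≠ insert b ρ := (Finset.insert_inj ha).not.2 hab
  have hunion : insert a ρ ∪ insert b ρ = insert a (insert b ρ) := by grind
  have hflip := xor_faceFlip_insert_insert ha hb hab
  have ha' : a ∉ insert b ρ := by simp [hab, ha]
  simp only [UpAdj, ne_eq, hne, not_false_eq_true, hunion,
    Finset.insert_sdiff_insert' hab ha, Finset.insert_sdiff_insert' hab.symm hb,
    Finset.card_insert_of_notMem ha', Finset.card_insert_of_notMem ha,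
    Finset.card_insert_of_notMem hb, Finset.mem_singleton, forall_eq, true_and]
  grind

theorem Pharm_insert_insert {ρ : Finset (Fin n)} {a b : Fin n} (ha : a ∉ ρ) (hb : b ∉ ρ)
    (hab : a ≠ b) (haX : insert a ρ ∈ simplices n X k) (hbX : insert b ρ ∈ simplices n X k)
    (x y : Bool) :
    Pharm n X w k (some (insert a ρ, x)) (some (insert b ρ, y)) =
      if insert a (insert b ρ) ∉ X ∧ xor x (faceFlip n ρ a) = xor y (faceFlip n ρ b) then
        w a * w b / Kfull n X w k
      else 0 := by
  have hne : insert a ρ ≠ insert b ρ := (Finset.insert_inj ha).not.2 hab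
  rw [mem_simplices] at haX hbX
  simp only [Pharm, haX, hbX, Prod.mk.injEq, hne, false_and, downAdj_insert_insert ha hb hab,
    upAdj_insert_insert_not ha hb hab, Finset.insert_sdiff_insert' hab ha,
    Finset.insert_sdiff_insert' hab.symm hb, Finset.sum_singleton, and_self, if_true, if_false]
  grind

theorem Pharm_eq_zero_of_card_inter_ne {s t : Finset (Fin n)} (hst : s ≠ t)
    (h : (s ∩ t).card ≠ k) (x y : Bool) :
    Pharm n X w k (some (s, x)) (some (t, y)) = 0 := by
  simp only [Pharm, DownAdj, Prod.mk.injEq, hst]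
  grind

theorem Pharm_apply_self {s : Finset (Fin n)} (hs : s ∈ simplices n X k) (x : Bool) :
    Pharm n X w k (some (s, x)) (some (s, x)) = fullLap n X w k s s / Kfull n X w k := by
  rw [fullLap, Matrix.add_apply, upLap_apply_self (mem_simplices.1 hs).2, downLap_apply_self hs]
  simp [Pharm, mem_simplices.1 hs]

theorem Pharm_apply_not (s : Finset (Fin n)) (x : Bool) :
    Pharm n X w k (some (s, x)) (some (s, !x)) = 0 := by
  simp [Pharm, DownAdj]

theorem Kfull_mul_Pharm_sub_Pharm (hK : Kfull n X w k ≠ 0) {s t : Finset (Fin n)}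
    (hs : s ∈ simplices n X k) (ht : t ∈ simplices n X k) :
    Kfull n X w k * (Pharm n X w k (some (s, false)) (some (t, false)) -
        Pharm n X w k (some (s, false)) (some (t, true))) = fullLap n X w k t s := by
  rcases eq_or_ne s t with rfl | hst
  · rw [Pharm_apply_self hs, ← Bool.not_false, Pharm_apply_not, sub_zero, mul_div_cancel₀ _ hK]
  by_cases hcard : (s ∩ t).card = k
  · obtain ⟨b, hb, hbs⟩ := Finset.exists_eq_insert_iff.2
      ⟨Finset.inter_subset_left, by rw [hcard, (mem_simplices.1 hs).2]⟩
    obtain ⟨a, ha, hat⟩ := Finset.exists_eq_insert_iff.2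
      ⟨Finset.inter_subset_right, by rw [hcard, (mem_simplices.1 ht).2]⟩
    generalize s ∩ t = ρ at *
    subst hbs hat
    have hab : a ≠ b := by rintro rfl; exact hst rfl
    rw [Pharm_insert_insert hb ha hab.symm hs ht, Pharm_insert_insert hb ha hab.symm hs ht,
      fullLap_insert_insert ha hb hab ht hs, Finset.insert_comm b a]
    by_cases hX : insert a (insert b ρ) ∈ X
    · simp only [hX, not_true_eq_false, false_and, if_true, if_false, sub_zero, mul_zero]
    · simp only [hX, not_false_eq_true, true_and, if_false, Bool.false_xor, Bool.true_xor]
      rw [ite_eq_sub_ite_eq_not]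
      field_simp
  · rw [Pharm_eq_zero_of_card_inter_ne hst hcard, Pharm_eq_zero_of_card_inter_ne hst hcard,
      sub_zero, mul_zero, eq_comm]
    rw [Finset.inter_comm] at hcard
    exact not_imp_comm.1 (card_inter_eq_of_fullLap_ne_zero hst.symm) hcard

end HarmonicWalk

section CoordinateProjection

variable {ι R : Type*} [Fintype ι] [Semiring R]

/-- The projection onto the span of the basis vectors indexed by `{i | p i}`: the common form of
the projections `PiPM` and `PiK`. -/
def coordProj (p : ι → Prop) : Matrix ι ι R :=
  Matrix.of fun i j => if i = j ∧ p i then 1 else 0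

theorem coordProj_mul_mul_coordProj_apply (p : ι → Prop) (M : Matrix ι ι R) (i j : ι) :
    (coordProj p * M * coordProj p : Matrix ι ι R) i j = if p i ∧ p j then M i j else 0 := by
  have coordProj_eq_diagonal :
      (coordProj p : Matrix ι ι R) = Matrix.diagonal fun i => if p i then 1 else 0 := by
    ext i j
    simp only [coordProj, Matrix.of_apply, Matrix.diagonal_apply, ite_and]
  rw [coordProj_eq_diagonal, Matrix.mul_diagonal, Matrix.diagonal_mul]
  simp only [ite_mul, one_mul, zero_mul, mul_ite, mul_one, mul_zero, ite_and]
  split_ifs <;> rfl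

theorem coordProj_mul_mul_coordProj_inj {p : ι → Prop} {M N : Matrix ι ι R} :
    (coordProj p * M * coordProj p : Matrix ι ι R) = coordProj p * N * coordProj p ↔
      ∀ i j, p i → p j → M i j = N i j := by
  simp only [← Matrix.ext_iff, coordProj_mul_mul_coordProj_apply]
  refine forall₂_congr fun i j => ⟨fun h hi hj => by simpa [hi, hj] using h, fun h => ?_⟩
  split_ifs with hij
  · exact h hij.1 hij.2
  · rfl

end CoordinateProjection

section Encoding

variable {n k : ℕ} {X : Finset (Finset (Fin n))}

theorem decodeQ_encode (σ : SState n) : decodeQ n (encode n σ) = some σ := by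
  cases σ <;> simp [decodeQ, encode]

theorem toQMat_encode (P : SState n → SState n → ℝ) (σ τ : SState n) :
    toQMat n P (encode n τ) (encode n σ) = P σ τ := by
  simp [toQMat, decodeQ_encode]

theorem lapQ_encode (L : Matrix (Finset (Fin n)) (Finset (Fin n)) ℝ) (t s : Finset (Fin n)) :
    lapQ n L (encode n (some (t, false))) (encode n (some (s, false))) = L t s := by
  simp [lapQ, encode]

theorem PiPM_eq_coordProj : PiPM n X k = coordProj fun q =>
    ∃ σ : OSimp n, σ.1 ∈ X ∧ σ.1.card = k + 1 ∧ q = encode n (some σ) := by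
  ext p q
  simp only [PiPM, coordProj, Matrix.of_apply]
  congr

theorem PiK_eq_coordProj : PiK n X k = coordProj fun q =>
    ∃ s ∈ X, s.card = k + 1 ∧ q = encode n (some (s, false)) := by
  ext p q
  simp only [PiK, coordProj, Matrix.of_apply]
  congr

theorem PiPM_mul_mul_PiPM_inj {M N : Matrix (QIdx n) (QIdx n) ℂ} :
    PiPM n X k * M * PiPM n X k = PiPM n X k * N * PiPM n X k ↔
      ∀ σ τ : OSimp n, σ.1 ∈ simplices n X k → τ.1 ∈ simplices n X k →
        M (encode n (some σ)) (encode n (some τ)) = N (encode n (some σ)) (encode n (some τ)) := by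
  rw [PiPM_eq_coordProj, coordProj_mul_mul_coordProj_inj]
  refine ⟨fun h σ τ hσ hτ => ?_, ?_⟩
  · rw [mem_simplices] at hσ hτ
    exact h _ _ ⟨σ, hσ.1, hσ.2, rfl⟩ ⟨τ, hτ.1, hτ.2, rfl⟩
  · rintro h _ _ ⟨σ, hσX, hσ, rfl⟩ ⟨τ, hτX, hτ, rfl⟩
    exact h σ τ (mem_simplices.2 ⟨hσX, hσ⟩) (mem_simplices.2 ⟨hτX, hτ⟩)

theorem PiK_mul_mul_PiK_inj {M N : Matrix (QIdx n) (QIdx n) ℂ} :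
    PiK n X k * M * PiK n X k = PiK n X k * N * PiK n X k ↔
      ∀ t ∈ simplices n X k, ∀ s ∈ simplices n X k,
        M (encode n (some (t, false))) (encode n (some (s, false))) =
          N (encode n (some (t, false))) (encode n (some (s, false))) := by
  rw [PiK_eq_coordProj, coordProj_mul_mul_coordProj_inj]
  refine ⟨fun h t ht s hs => ?_, ?_⟩
  · rw [mem_simplices] at ht hs
    exact h _ _ ⟨t, ht.1, ht.2, rfl⟩ ⟨s, hs.1, hs.2, rfl⟩
  · rintro h _ _ ⟨t, htX, ht, rfl⟩ ⟨s, hsX, hs, rfl⟩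
    exact h t (mem_simplices.2 ⟨htX, ht⟩) s (mem_simplices.2 ⟨hsX, hs⟩)

theorem PiK_mul_lapQ_mul_PiK {L : Matrix (Finset (Fin n)) (Finset (Fin n)) ℝ}
    (hL : ∀ t s, L t s ≠ 0 → t ∈ simplices n X k ∧ s ∈ simplices n X k) :
    PiK n X k * lapQ n L * PiK n X k = lapQ n L := by
  ext p q
  rw [PiK_eq_coordProj, coordProj_mul_mul_coordProj_apply]
  split_ifs with hpq
  · rfl
  obtain ⟨x, b, c⟩ := p
  obtain ⟨y, d, e⟩ := q
  simp only [lapQ, Matrix.of_apply]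
  split_ifs with hbits
  · obtain ⟨rfl, rfl, rfl, rfl⟩ := hbits
    refine (Complex.ofReal_eq_zero.2 (not_imp_comm.1 (hL _ _) fun ⟨ht, hs⟩ => hpq ?_)).symm
    rw [mem_simplices] at ht hs
    exact ⟨⟨_, ht.1, ht.2, by simp [encode]⟩, ⟨_, hs.1, hs.2, by simp [encode]⟩⟩
  · rfl

theorem compressA_kronecker_one_mul {α : ℕ} (G : Matrix (QIdx n) (QIdx n) ℂ)
    (U : Matrix (QIdx n × (Fin α → Bool)) (QIdx n × (Fin α → Bool)) ℂ) :
    compressA n α ((G ⊗ₖ (1 : Matrix (Fin α → Bool) (Fin α → Bool) ℂ)) * U) =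
      G * compressA n α U := by
  ext p q
  simp only [compressA, Matrix.of_apply, Matrix.mul_apply, Fintype.sum_prod_type (α₁ := QIdx n),
    Matrix.kroneckerMap_apply, Matrix.one_apply, mul_ite, mul_one, mul_zero, ite_mul, zero_mul,
    Finset.sum_ite_eq, Finset.mem_univ, if_true]

theorem hzGate_mul_apply_encode (A : Matrix (QIdx n) (QIdx n) ℂ) (t : Finset (Fin n))
    (q : QIdx n) :
    (hzGate n * A) (encode n (some (t, false))) q =
      (Real.sqrt 2 : ℂ)⁻¹ *
        (A (encode n (some (t, false))) q - A (encode n (some (t, true))) q) := by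
  simp only [encode]
  rw [Matrix.mul_apply, Fintype.sum_prod_type,
    Finset.sum_eq_single_of_mem _ (Finset.mem_univ fun i => decide (i ∈ t))
      fun x _ hx => by simp [hzGate, hx.symm]]
  simp only [hzGate, Matrix.of_apply, Bool.false_eq, true_and, ite_mul, neg_mul, zero_mul,
    Fintype.sum_prod_type, Fintype.sum_bool, Finset.sum_ite_eq', Finset.mem_univ,
    Bool.true_eq_false, reduceIte]
  ring

end Encoding

theorem harmonic_walk_encodes_laplacian_general {n k α : ℕ} {X : Finset (Finset (Fin n))}
    (hX : IsComplex n X) {w : Fin n → ℝ} (hK : Kfull n X w k ≠ 0)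
    {U : Matrix (QIdx n × (Fin α → Bool)) (QIdx n × (Fin α → Bool)) ℂ}
    (henc : PiPM n X k * compressA n α U * PiPM n X k =
      PiPM n X k * toQMat n (Pharm n X w k) * PiPM n X k) :
    PiK n X k *
        compressA n α ((hzGate n ⊗ₖ (1 : Matrix (Fin α → Bool) (Fin α → Bool) ℂ)) * U) *
        PiK n X k =
      ((Real.sqrt 2 : ℂ) * (Kfull n X w k : ℂ))⁻¹ • lapQ n (fullLap n X w k) := by
  rw [compressA_kronecker_one_mul,
    ← PiK_mul_lapQ_mul_PiK (L := fullLap n X w k) fun _ _ => mem_simplices_of_fullLap_ne_zero hX,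
    ← Matrix.smul_mul, ← Matrix.mul_smul]
  refine PiK_mul_mul_PiK_inj.2 fun t ht s hs => ?_
  have entry_eq (y : Bool) : compressA n α U (encode n (some (t, y)))
      (encode n (some (s, false))) = Pharm n X w k (some (s, false)) (some (t, y)) := by
    rw [PiPM_mul_mul_PiPM_inj.1 henc (t, y) (s, false) ht hs, toQMat_encode]
  rw [hzGate_mul_apply_encode, entry_eq, entry_eq, Matrix.smul_apply, lapQ_encode,
    ← Kfull_mul_Pharm_sub_Pharm hK hs ht, smul_eq_mul, mul_inv]
  have hK' : (Kfull n X w k : ℂ) ≠ 0 := Complex.ofReal_ne_zero.2 hK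
  push_cast
  rw [mul_assoc, inv_mul_cancel_left₀ hK']

/-- If `U` is a unitary encoding of `Π_k^± P Π_k^±` with an
`α`-qubit ancilla, then `V = ((I^{⊗n} ⊗ HZ ⊗ I) ⊗ I^{⊗α}) U` is a unitary encoding of
`Δ_k/(√2 · K)`. -/
theorem harmonic_walk_encodes_laplacian (n k α : ℕ) (X : Finset (Finset (Fin n)))
    (hX : IsComplex n X) (w : Fin n → ℝ) (hw : ∀ v, 0 < w v)
    (hne : (simplices n X k).Nonempty)
    (U : Matrix (QIdx n × (Fin α → Bool)) (QIdx n × (Fin α → Bool)) ℂ)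
    (hU : U ∈ Matrix.unitaryGroup (QIdx n × (Fin α → Bool)) ℂ)
    (henc : PiPM n X k * compressA n α U * PiPM n X k =
      PiPM n X k * toQMat n (Pharm n X w k) * PiPM n X k) :
    PiK n X k *
        compressA n α ((hzGate n ⊗ₖ (1 : Matrix (Fin α → Bool) (Fin α → Bool) ℂ)) * U) *
        PiK n X k =
      ((Real.sqrt 2 : ℂ) * (Kfull n X w k : ℂ))⁻¹ • lapQ n (fullLap n X w k) :=
  harmonic_walk_encodes_laplacian_general hX (Kfull_pos hw hne).ne' henc

end QWSC
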